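/- In the endomorphism operad of a K-module L, the derivation deviation of the coboundary operator over the cup product is measured by the tribraces with the formal associator: for all homogeneous f ∈ E^m, g ∈ E^n one has ∂(f ⌣ g) − f ⌣ ∂g − (−1)^n ∂f ⌣ g = (−1)^n {μ², f, g}, where μ² := μ • μ. -/

import Mathlib

/-!
Everything is evaluated pointwise. Write `M a b` for the biadditive form of `μ`. The cup product is
`(f ⌣ g)(x) = (-1)^{mn} M (f(x₀,…)) (g(x_m,…))`, and the coboundary is
`∂f(x) = Σ_{i<m} (-1)^i f(…, M xᵢ xᵢ₊₁, …) + (-1)^m M (f(x₀,…)) x_m - M x₀ (f(x₁,…))`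
(`cupFn_apply` and `gbr_apply`). In `∂(f ⌣ g)` the inner multiplication falls into a slot of `f`
or into a slot of `g`; these terms cancel against the sums occurring in `∂f ⌣ g` and `f ⌣ ∂g`.
The six remaining terms are doubly nested products of `f`, `g` and one free variable, and they are
the values of the formal associator at `(f, g, x)`, `(f, x, g)` and `(x, f, g)`, that is, the three
summands of the tribraces. Only biadditivity of `μ` is used, together with the fact that `f` reads
only its first `m` arguments.
-/


variable {K : Type*} [CommRing K] {L : Type*} [AddCommGroup L] [Module K L]

/-- `(-1)^z` for an integer exponent `z`. -/
def sgn (z : ℤ) : ℤ := (-1) ^ z.natAbs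

/-- The underlying function (on `ℕ`-indexed families of elements of `L`) of an
`n`-multilinear map `f ∈ Eⁿ`; equality of such functions is equivalent to equality
of the multilinear maps. -/
def toFn {n : ℕ} (f : MultilinearMap K (fun _ : Fin n => L) L) : (ℕ → L) → L :=
  fun x => f fun a => x a.val

/-- Partial composition `F ∘ᵢ G`, where `n` is the arity (degree) of `G`:
`(f ∘ᵢ g)(x_0, …) = (-1)^{i(n-1)} f(x_0, …, x_{i-1}, g(x_i, …, x_{i+n-1}), x_{i+n}, …)`. -/
def pcomp (i n : ℕ) (F G : (ℕ → L) → L) : (ℕ → L) → L :=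
  fun x => sgn ((i : ℤ) * ((n : ℤ) - 1)) •
    F fun k => if k < i then x k else if k = i then G (fun j => x (i + j)) else x (k + n - 1)

/-- Total composition `F • G := Σ_{i=0}^{m-1} F ∘ᵢ G`, where `m, n` are the arities of `F, G`. -/
def tcomp (m n : ℕ) (F G : (ℕ → L) → L) : (ℕ → L) → L :=
  ∑ i ∈ Finset.range m, pcomp i n F G

/-- Gerstenhaber bracket `[F, G] := F • G - (-1)^{|F||G|} G • F` for arities `m, n` of `F, G`. -/
def gbr (m n : ℕ) (F G : (ℕ → L) → L) : (ℕ → L) → L :=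
  tcomp m n F G - sgn (((m : ℤ) - 1) * ((n : ℤ) - 1)) • tcomp n m G F

/-- Cup product `F ⌣ G := (-1)^m (Mu ∘₀ F) ∘ₘ G`, where `m, n` are the arities of `F, G`. -/
def cupFn (m n : ℕ) (Mu F G : (ℕ → L) → L) : (ℕ → L) → L :=
  sgn (m : ℤ) • pcomp m n (pcomp 0 m Mu F) G

/-- Gerstenhaber tribraces `{H, F, G} := Σ_{i=0}^{|H|-1} Σ_{j=i+m}^{|F|+|H|} (H ∘ᵢ F) ∘ⱼ G`
for arities `p, m, n` of `H, F, G`. -/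
def triFn (p m n : ℕ) (H F G : (ℕ → L) → L) : (ℕ → L) → L :=
  ∑ i ∈ Finset.range (p - 1), ∑ j ∈ Finset.Icc (i + m) (m + p - 2), pcomp j n (pcomp i m H F) G

theorem sgn_eq_negOnePow (z : ℤ) : sgn z = (z.negOnePow : ℤ) := by
  rcases Int.even_or_odd z with h | h
  · rw [Int.negOnePow_even z h, sgn, (Int.natAbs_even.2 h).neg_one_pow]; rfl
  · rw [Int.negOnePow_odd z h, sgn, (Int.natAbs_odd.2 h).neg_one_pow]; rfl

theorem sgn_add (a b : ℤ) : sgn (a + b) = sgn a * sgn b := by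
  simp [sgn_eq_negOnePow, Int.negOnePow_add]

theorem sgn_neg (a : ℤ) : sgn (-a) = sgn a := by
  simp [sgn_eq_negOnePow, Int.negOnePow_neg]

theorem sgn_one : sgn 1 = -1 := by simp [sgn]

theorem sgn_zero : sgn 0 = 1 := by simp [sgn]

theorem sgn_sub (a b : ℤ) : sgn (a - b) = sgn a * sgn b := by
  rw [sub_eq_add_neg, sgn_add, sgn_neg]

theorem sgn_cases (a : ℤ) : sgn a = 1 ∨ sgn a = -1 := neg_one_pow_eq_or ℤ _

/-- `F` depends only on its first `m` arguments, as the function of an `m`-ary map does. -/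
def IsLocal (m : ℕ) (F : (ℕ → L) → L) : Prop :=
  ∀ x y : ℕ → L, (∀ k < m, x k = y k) → F x = F y

theorem isLocal_toFn {m : ℕ} (f : MultilinearMap K (fun _ : Fin m => L) L) :
    IsLocal m (toFn f) := by
  intro x y h
  unfold toFn
  congr 1
  funext a
  exact h a a.isLt

theorem update_pair_zero {α : Type*} (a b c : α) : Function.update ![a, b] 0 c = ![c, b] := by
  ext i; fin_cases i <;> rfl

theorem update_pair_one {α : Type*} (a b c : α) : Function.update ![a, b] 1 c = ![a, c] := by
  ext i; fin_cases i <;> rfl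

/-- The binary operation `μ` as a biadditive map. -/
def biadd (μ : MultilinearMap K (fun _ : Fin 2 => L) L) : L →+ L →+ L :=
  AddMonoidHom.mk' (fun a => AddMonoidHom.mk' (fun b => μ ![a, b])
    (fun b c => by
      have h := μ.map_update_add ![a, b] 1 b c
      rwa [update_pair_one, update_pair_one, update_pair_one] at h))
    (fun a c => by
      ext b
      have h := μ.map_update_add ![a, b] 0 a c
      rwa [update_pair_zero, update_pair_zero, update_pair_zero] at h)

theorem toFn_eq_biadd (μ : MultilinearMap K (fun _ : Fin 2 => L) L) :
    toFn μ = fun x => biadd μ (x 0) (x 1) := by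
  funext x
  change μ _ = μ _
  congr 1
  funext a
  fin_cases a <;> rfl

/-- The family `x` with its entries `i` and `i + 1` multiplied together. -/
def mergeAt (M : L →+ L →+ L) (i : ℕ) (x : ℕ → L) : ℕ → L :=
  fun k => if k < i then x k else if k = i then M (x i) (x (i + 1)) else x (k + 1)

theorem cupFn_apply (M : L →+ L →+ L) (m n : ℕ) (F G : (ℕ → L) → L) (hF : IsLocal m F)
    (x : ℕ → L) :
    cupFn m n (fun x => M (x 0) (x 1)) F G x =
      sgn ((m : ℤ) * n) • M (F x) (G fun j => x (m + j)) := by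
  have h : F (fun j => if j < m then x j else if j = m then G (fun j => x (m + j))
      else x (j + n - 1)) = F x := hF _ _ (fun k hk => by simp [hk])
  simp only [cupFn, pcomp, Pi.smul_apply]
  simp [h, mul_sub, sgn_sub, sgn_zero, smul_smul]
  rcases sgn_cases m with h | h <;> simp [h]

theorem pcomp_two_apply (M : L →+ L →+ L) (i : ℕ) (F : (ℕ → L) → L) (x : ℕ → L) :
    pcomp i 2 F (fun x => M (x 0) (x 1)) x = sgn i • F (mergeAt M i x) := by
  simp only [pcomp]
  congr 1
  simp

theorem gbr_apply (M : L →+ L →+ L) (m : ℕ) (F : (ℕ → L) → L) (x : ℕ → L) :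
    gbr m 2 F (fun x => M (x 0) (x 1)) x =
      ∑ i ∈ Finset.range m, sgn i • F (mergeAt M i x) + sgn m • M (F x) (x m)
        - M (x 0) (F fun j => x (1 + j)) := by
  simp only [gbr, tcomp, Pi.sub_apply, Pi.smul_apply, Finset.sum_apply, pcomp_two_apply]
  simp [Finset.sum_range_succ, pcomp, sgn_sub, sgn_zero, sgn_one, smul_smul]
  rcases sgn_cases m with h | h <;> simp [h] <;> abel

theorem isLocal_gbr (M : L →+ L →+ L) (m : ℕ) (F : (ℕ → L) → L) (hF : IsLocal m F) :
    IsLocal (m + 1) (gbr m 2 F (fun x => M (x 0) (x 1))) := by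
  intro x y h
  rw [gbr_apply, gbr_apply]
  have h1 : F x = F y := hF _ _ fun k hk => h k (by omega)
  have h2 : F (fun j => x (1 + j)) = F (fun j => y (1 + j)) :=
    hF _ _ fun k hk => h _ (by omega)
  have h3 : ∀ i ∈ Finset.range m, sgn i • F (mergeAt M i x) = sgn i • F (mergeAt M i y) := by
    intro i hi
    rw [Finset.mem_range] at hi
    congr 1
    refine hF _ _ fun k hk => ?_
    simp only [mergeAt]
    rw [h k (by omega), h i (by omega), h (i + 1) (by omega), h (k + 1) (by omega)]
  rw [h1, h2, Finset.sum_congr rfl h3, h m (by omega), h 0 (by omega)]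

/-- The formal associator `μ² = μ • μ`, evaluated. -/
theorem tcomp_two_two (M : L →+ L →+ L) :
    tcomp 2 2 (fun x => M (x 0) (x 1)) (fun x => M (x 0) (x 1)) =
      fun x => M (M (x 0) (x 1)) (x 2) - M (x 0) (M (x 1) (x 2)) := by
  funext x
  simp [tcomp, Finset.sum_range_succ, pcomp_two_apply, mergeAt, sgn_zero, sgn_one, sub_eq_add_neg]

/-- The tribraces with a ternary operation `A` have three summands, one for each position of the free variable. -/
theorem triFn_apply (m n : ℕ) (F G : (ℕ → L) → L) (hF : IsLocal m F)
    (A : L → L → L → L) (x : ℕ → L) :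
    triFn 3 m n (fun x => A (x 0) (x 1) (x 2)) F G x =
      (sgn ((m : ℤ) * n) * sgn m) • A (F x) (G fun j => x (m + j)) (x (m + n))
      - (sgn ((m : ℤ) * n) * sgn m * sgn n) • A (F x) (x m) (G fun j => x (m + 1 + j))
      + (sgn ((m : ℤ) * n) * sgn n) •
        A (x 0) (F fun j => x (1 + j)) (G fun j => x (m + 1 + j)) := by
  have hI0 : Finset.Icc m (m + 1) = {m, m + 1} := by
    ext k; simp only [Finset.mem_Icc, Finset.mem_insert, Finset.mem_singleton]; omega
  have e0 : pcomp m n (pcomp 0 m (fun x => A (x 0) (x 1) (x 2)) F) G x =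
      (sgn ((m : ℤ) * n) * sgn m) • A (F x) (G fun j => x (m + j)) (x (m + n)) := by
    have h : F (fun j => if j < m then x j else if j = m then G (fun j => x (m + j))
        else x (j + n - 1)) = F x := hF _ _ fun k hk => by simp [hk]
    have hx : 1 + m + n - 1 = m + n := by omega
    simp [pcomp, h, hx, mul_sub, sgn_sub, sgn_zero]
  have e1 : pcomp (m + 1) n (pcomp 0 m (fun x => A (x 0) (x 1) (x 2)) F) G x =
      (-(sgn ((m : ℤ) * n) * sgn m * sgn n)) •
        A (F x) (x m) (G fun j => x (m + 1 + j)) := by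
    have h : F (fun j => if j ≤ m then x j else if j = m + 1 then
        G (fun j => x (m + 1 + j)) else x (j + n - 1)) = F x :=
      hF _ _ fun k hk => by simp [hk.le]
    have h2 : 2 + m - 1 = m + 1 := by omega
    simp [pcomp, h, h2, mul_sub, add_mul, sgn_sub, sgn_add, sgn_zero, sgn_one]
    congr 1; ring
  have e2 : pcomp (m + 1) n (pcomp 1 m (fun x => A (x 0) (x 1) (x 2)) F) G x =
      (sgn ((m : ℤ) * n) * sgn n) •
        A (x 0) (F fun j => x (1 + j)) (G fun j => x (m + 1 + j)) := by
    have h : F (fun j => if 1 + j ≤ m then x (1 + j) else if 1 + j = m + 1 then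
        G (fun j => x (m + 1 + j)) else x (1 + j + n - 1)) = F (fun j => x (1 + j)) :=
      hF _ _ fun k hk => by simp [show 1 + k ≤ m by omega]
    have h2 : 2 + m - 1 = m + 1 := by omega
    simp [pcomp, h, h2, mul_sub, add_mul, sgn_sub, sgn_add, sgn_one, smul_smul]
    rcases sgn_cases m with hm | hm <;> simp [hm]
  simp only [triFn, Finset.sum_apply]
  simp [Finset.sum_range_succ, hI0, add_comm 1 m, e0, e1, e2, sub_eq_add_neg]

/-- In the endomorphism operad, the derivation deviation of the coboundary operator over the
cup product is measured by the tribraces with the formal associator `μ² := μ • μ`: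
`∂(f ⌣ g) - f ⌣ ∂g - (-1)^n ∂f ⌣ g = (-1)^n {μ², f, g}`. -/
theorem endop_coboundary_dev_cup {m n : ℕ} (μ : MultilinearMap K (fun _ : Fin 2 => L) L) (f : MultilinearMap K (fun _ : Fin m => L) L) (g : MultilinearMap K (fun _ : Fin n => L) L) :
    gbr (m + n) 2 (cupFn m n (toFn μ) (toFn f) (toFn g)) (toFn μ) -
        cupFn m (n + 1) (toFn μ) (toFn f) (gbr n 2 (toFn g) (toFn μ)) -
        sgn (n : ℤ) • cupFn (m + 1) n (toFn μ) (gbr m 2 (toFn f) (toFn μ)) (toFn g) =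
      sgn (n : ℤ) •
        triFn 3 m n (tcomp 2 2 (toFn μ) (toFn μ)) (toFn f) (toFn g) := by
  rw [toFn_eq_biadd]
  have hF := isLocal_toFn f
  generalize toFn f = F at hF
  generalize toFn g = G
  generalize biadd μ = M
  funext x
  -- the part of `∂(f ⌣ g)` where the inner product falls into a slot of `f` or of `g`
  have hs : ∑ i ∈ Finset.range (m + n),
        sgn i • cupFn m n (fun x => M (x 0) (x 1)) F G (mergeAt M i x) =
      sgn ((m : ℤ) * n) • M (∑ i ∈ Finset.range m, sgn i • F (mergeAt M i x))
        (G fun j => x (m + 1 + j))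
      + (sgn ((m : ℤ) * n) * sgn m) •
        M (F x) (∑ i ∈ Finset.range n, sgn i • G (mergeAt M i fun j => x (m + j))) := by
    rw [Finset.sum_range_add]
    congr 1
    · simp only [map_sum, AddMonoidHom.finsetSum_apply, Finset.smul_sum, map_zsmul,
        AddMonoidHom.zsmul_apply]
      refine Finset.sum_congr rfl fun i hi => ?_
      rw [Finset.mem_range] at hi
      rw [cupFn_apply M m n F G hF, smul_comm]
      congr 4
      funext j
      simp only [mergeAt]
      rw [if_neg (by omega), if_neg (by omega)]
      congr 1
      omega
    · simp only [map_sum, Finset.smul_sum, map_zsmul]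
      refine Finset.sum_congr rfl fun i hi => ?_
      have h1 : F (mergeAt M (m + i) x) = F x :=
        hF _ _ fun k hk => by simp [mergeAt, show k < m + i by omega]
      have h2 : (fun j => mergeAt M (m + i) x (m + j)) = mergeAt M i fun j => x (m + j) := by
        funext j
        simp [mergeAt, add_assoc]
      rw [cupFn_apply M m n F G hF, h1, h2]
      push_cast
      rw [sgn_add, smul_smul, smul_smul]
      congr 1
      ring
  rw [tcomp_two_two]
  simp only [Pi.sub_apply, Pi.smul_apply]
  rw [gbr_apply, hs, cupFn_apply M m (n + 1) _ _ hF,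
    cupFn_apply M (m + 1) n _ _ (isLocal_gbr M m F hF), gbr_apply, gbr_apply,
    triFn_apply m n F G hF (fun a b c => M (M a b) c - M a (M b c)),
    cupFn_apply M m n F G hF, cupFn_apply M m n F G hF]
  have e1 : (fun j => x (1 + (m + j))) = fun j => x (m + 1 + j) := by
    funext j; congr 1; omega
  have e2 : (fun j => x (m + (1 + j))) = fun j => x (m + 1 + j) := by
    funext j; congr 1; omega
  simp only [e1, e2]
  push_cast
  simp only [mul_add, add_mul, mul_one, one_mul, sgn_add, map_add, map_sub, map_zsmul,
    AddMonoidHom.add_apply, AddMonoidHom.sub_apply, AddMonoidHom.zsmul_apply, add_zero]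
  rcases sgn_cases m with hm | hm <;> rcases sgn_cases n with hn | hn <;>
    rcases sgn_cases ((m : ℤ) * n) with hmn | hmn <;> simp [hm, hn, hmn] <;> abel
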